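/- Let θ_1, θ_2, θ_3 be real numbers such that 1, θ_1, θ_2, θ_3 are linearly independent over ℚ. Define ψ(t) = min over integers x with 0 < x ≤ t of max_{1≤j≤3} ‖xθ_j‖, and set ω = sup{ γ ≥ 0 : liminf_{t→∞} t^γ ψ(t) < ∞ } and ω̂ = sup{ γ ≥ 0 : limsup_{t→∞} t^γ ψ(t) < ∞ } (here ω̂ < 1 since the numbers are linearly independent). Then ω ≥ (ω̂/2) · ( ω̂/(1−ω̂) + √( (ω̂/(1−ω̂))² + 4ω̂/(1−ω̂) ) ). -/

import Mathlib

open Filter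

/-- Distance from a real number to the nearest integer. -/
noncomputable def nint (x : ℝ) : ℝ := |x - round x|

/-- The irrationality measure function for simultaneous approximation to three reals:
`psi3 θ t = min_{x ∈ ℤ, 0 < x ≤ t} max_{1 ≤ j ≤ 3} ‖x θ_j‖`. -/
noncomputable def psi3 (θ : Fin 3 → ℝ) (t : ℝ) : ℝ :=
  sInf {v : ℝ | ∃ x : ℤ, 0 < x ∧ (x : ℝ) ≤ t ∧
    v = max (nint (x * θ 0)) (max (nint (x * θ 1)) (nint (x * θ 2)))}

theorem span_triple_ne_top (a b c : Fin 4 → ℚ) : Submodule.span ℚ {a, b, c} ≠ ⊤ := by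
  intro h
  have h1 := finrank_range_le_card (R := ℚ) ![a, b, c]
  rw [Set.finrank, show Set.range ![a, b, c] = {a, b, c} by
    ext v
    simp [Matrix.range_cons]
    tauto, h, finrank_top] at h1
  simp at h1

/-- In a sequence of rational vectors whose tails span `ℚ⁴` there are consecutive planes
`⟨z (i+1), z (i+2)⟩ = … = ⟨z k, z (k+1)⟩` whose outer neighbours `z i`, `z (k+2)` complete
`z k, z (k+1)` to a basis. -/
theorem exists_independent_quadruple (z : ℕ → Fin 4 → ℚ)
    (hcons : ∀ j, LinearIndependent ℚ ![z j, z (j + 1)])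
    (hfull : ∀ N, Submodule.span ℚ (z '' Set.Ici N) = ⊤) (N : ℕ) :
    ∃ i k, N ≤ i ∧ i < k ∧
      z (i + 1) ∈ Submodule.span ℚ {z k, z (k + 1)} ∧
      z (i + 2) ∈ Submodule.span ℚ {z k, z (k + 1)} ∧
      LinearIndependent ℚ ![z (k + 2), z i, z k, z (k + 1)] := by
  classical
  let V : ℕ → Submodule ℚ (Fin 4 → ℚ) := fun j => Submodule.span ℚ (z '' Set.Icc N j)
  have hmono : Monotone V := fun a b hab =>
    Submodule.span_mono (Set.image_mono (Set.Icc_subset_Icc_right hab))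
  have hmem : ∀ l j, N ≤ l → l ≤ j → z l ∈ V j := fun l j h1 h2 =>
    Submodule.subset_span ⟨l, ⟨h1, h2⟩, rfl⟩
  have hex : ∃ j, V j = ⊤ := by
    obtain ⟨n, hn⟩ := monotone_stabilizes_iff_noetherian.2
      (inferInstance : IsNoetherian ℚ (Fin 4 → ℚ)) ⟨V, hmono⟩
    refine ⟨n, ?_⟩
    rw [eq_top_iff, ← hfull N, Submodule.span_le]
    rintro _ ⟨l, hl, rfl⟩
    have h1 : z l ∈ V (max n l) := hmem _ _ hl (le_max_right _ _)
    have h2 : V n = V (max n l) := hn _ (le_max_left _ _)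
    rw [h2]
    exact h1
  have hj := Nat.find_spec hex
  have hmin : ∀ m < Nat.find hex, V m ≠ ⊤ := fun m hm => Nat.find_min hex hm
  generalize Nat.find hex = j at hj hmin
  have hjN : N + 2 ≤ j := by
    by_contra! hlt
    apply span_triple_ne_top (z N) (z (N + 1)) 0
    rw [eq_top_iff, ← hj, Submodule.span_le]
    rintro _ ⟨l, ⟨hl1, hl2⟩, rfl⟩
    apply Submodule.subset_span
    have : l = N ∨ l = N + 1 := by omega
    rcases this with rfl | rfl <;> simp
  obtain ⟨k, rfl⟩ : ∃ k, j = k + 2 := ⟨j - 2, by omega⟩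
  have hP : ∃ i, N ≤ i ∧ i < k ∧ z i ∉ Submodule.span ℚ {z k, z (k + 1)} := by
    by_contra! hcon
    apply span_triple_ne_top (z k) (z (k + 1)) (z (k + 2))
    rw [eq_top_iff, ← hj, Submodule.span_le]
    rintro _ ⟨l, ⟨hl1, hl2⟩, rfl⟩
    by_cases hlk : l < k
    · refine Submodule.span_mono ?_ (hcon l hl1 hlk)
      intro x hx
      simp only [Set.mem_insert_iff, Set.mem_singleton_iff] at hx ⊢
      tauto
    · apply Submodule.subset_span
      have : l = k ∨ l = k + 1 ∨ l = k + 2 := by omega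
      rcases this with rfl | rfl | rfl <;> simp
  obtain ⟨i₀, hi₀N, hi₀k, hi₀⟩ := hP
  let Q : ℕ → Prop := fun i => i < k ∧ z i ∉ Submodule.span ℚ {z k, z (k + 1)}
  have hQ : Q (Nat.findGreatest Q k) := Nat.findGreatest_spec hi₀k.le ⟨hi₀k, hi₀⟩
  have hNi : i₀ ≤ Nat.findGreatest Q k := Nat.le_findGreatest hi₀k.le ⟨hi₀k, hi₀⟩
  have hgt : ∀ l, Nat.findGreatest Q k < l → l ≤ k → ¬ Q l :=
    fun l h1 h2 => Nat.findGreatest_is_greatest h1 h2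
  generalize Nat.findGreatest Q k = i at hQ hNi hgt
  have hin : ∀ l, i < l → l ≤ k + 1 → z l ∈ Submodule.span ℚ {z k, z (k + 1)} := by
    intro l h1 h2
    rcases lt_or_ge l k with h | h
    · by_contra hc
      exact hgt l h1 h.le ⟨h, hc⟩
    · apply Submodule.subset_span
      have : l = k ∨ l = k + 1 := by omega
      rcases this with rfl | rfl <;> simp
  refine ⟨i, k, by omega, hQ.1, hin _ (by omega) (by have := hQ.1; omega),
    hin _ (by omega) (by have := hQ.1; omega), ?_⟩
  refine linearIndependent_finCons.2 ⟨linearIndependent_finCons.2 ⟨hcons k, ?_⟩, ?_⟩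
  · rw [show Set.range ![z k, z (k + 1)] = {z k, z (k + 1)} by
      simp [Matrix.range_cons, Set.pair_comm]]
    exact hQ.2
  · intro hmem2
    apply hmin (k + 1) (by omega)
    have h3 : z (k + 2) ∈ V (k + 1) := by
      refine Submodule.span_le.2 ?_ hmem2
      rintro _ ⟨l, rfl⟩
      have := hQ.1
      fin_cases l
      · exact hmem _ _ (by omega) (by omega)
      · exact hmem _ _ (by omega) (by omega)
      · exact hmem _ _ (by omega) (by omega)
    rw [eq_top_iff, ← hj, Submodule.span_le]
    rintro _ ⟨l, ⟨hl1, hl2⟩, rfl⟩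
    rcases Nat.lt_or_ge l (k + 2) with h | h
    · exact hmem _ _ hl1 (by omega)
    · rwa [show l = k + 2 by omega]

/-- The sequence of successive minima records of a positive function with infimum zero. -/
theorem exists_record_sequence (d : ℕ → ℝ) (hpos : ∀ n, 1 ≤ n → 0 < d n)
    (hinf : ∀ ε > 0, ∃ n, 1 ≤ n ∧ d n < ε) :
    ∃ q : ℕ → ℕ, StrictMono q ∧ (∀ j, 1 ≤ q j) ∧ (∀ j, d (q (j + 1)) < d (q j)) ∧
      ∀ j x, 1 ≤ x → x < q (j + 1) → d (q j) ≤ d x := by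
  classical
  have hstep : ∀ m : ℕ, 1 ≤ m → (∀ x, 1 ≤ x → x ≤ m → d m ≤ d x) →
      ∃ n, m < n ∧ d n < d m ∧ ∀ x, 1 ≤ x → x < n → d m ≤ d x := by
    intro m hm hmm
    have hex := hinf (d m) (hpos m hm)
    obtain ⟨h1, h2⟩ := Nat.find_spec hex
    refine ⟨Nat.find hex, ?_, h2, ?_⟩
    · by_contra! hle
      exact absurd (hmm _ h1 hle) (not_le.2 h2)
    · intro x hx1 hx2
      by_contra! hc
      exact Nat.find_min hex hx2 ⟨hx1, hc⟩
  let S := {m : ℕ // 1 ≤ m ∧ ∀ x, 1 ≤ x → x ≤ m → d m ≤ d x}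
  have hnext : ∀ s : S, ∃ s' : S, s.1 < s'.1 ∧ d s'.1 < d s.1 ∧
      ∀ x, 1 ≤ x → x < s'.1 → d s.1 ≤ d x := by
    rintro ⟨m, hm, hmm⟩
    obtain ⟨n, h1, h2, h3⟩ := hstep m hm hmm
    refine ⟨⟨n, by omega, fun x hx1 hx2 => ?_⟩, h1, h2, h3⟩
    rcases hx2.lt_or_eq with h | rfl
    · exact h2.le.trans (h3 x hx1 h)
    · exact le_rfl
  choose f hf using hnext
  let s₀ : S := ⟨1, le_rfl, fun x h1 h2 => by rw [le_antisymm h2 h1]⟩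
  refine ⟨fun j => (f^[j] s₀).1, strictMono_nat_of_lt_succ fun j => ?_, fun j => (f^[j] s₀).2.1,
    fun j => ?_, fun j x => ?_⟩
  · simp only [Function.iterate_succ_apply']
    exact (hf _).1
  · simp only [Function.iterate_succ_apply']
    exact (hf _).2.1
  · simp only [Function.iterate_succ_apply']
    exact (hf _).2.2 x

/-- The numerical core: the constraints on four consecutive records force `log q` to be bounded. -/
theorem exists_bound_of_log_constraints {α β : ℝ} (hα : 0 < α) (hα1 : α < 1) (hβ : 0 < β)
    (h1 : (1 - α) * β < α) (h2 : (1 - α) * β ^ 2 < α ^ 2 * β + α ^ 3) (c K₁ K₂ : ℝ) :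
    ∃ K : ℝ, ∀ A B C D z₀ z₁ z₂ z₃ : ℝ, B ≤ C →
      z₀ ≤ c - α * A → z₁ ≤ c - α * B → z₃ ≤ c - α * D →
      z₂ + C ≤ K₁ + z₁ + B → 0 ≤ K₂ + z₀ + z₂ + z₃ + D →
      α * B ≤ c + β * A → α * D ≤ c + β * C → B ≤ K := by
  have hκ : 0 < α ^ 2 * β + α ^ 3 - (1 - α) * β ^ 2 := by linarith
  refine ⟨(α * β * (K₁ + K₂ + 3 * c) + α ^ 2 * c + (1 - α) * β * c) /
    (α ^ 2 * β + α ^ 3 - (1 - α) * β ^ 2), fun A B C D z₀ z₁ z₂ z₃ hBC h0 hz1 h3 h4 h5 h6 h7 => ?_⟩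
  rw [le_div_iff₀ hκ]
  have e : 0 ≤ K₁ + K₂ + 3 * c - α * A - C + (1 - α) * B + (1 - α) * D := by linarith
  have e1 := mul_nonneg (mul_pos hα hβ).le e
  have e2 := mul_le_mul_of_nonneg_left h6 (sq_nonneg α)
  have e3 := mul_le_mul_of_nonneg_left h7 (mul_pos (sub_pos.2 hα1) hβ).le
  have e4 := mul_nonneg (mul_pos (sub_pos.2 h1) hβ).le (sub_nonneg.2 hBC)
  nlinarith [e1, e2, e3, e4]

theorem exists_exponents {S : Set ℝ} {w : ℝ} (hw : IsLUB S w) (hw0 : 0 < w) (hw1 : w < 1) {x : ℝ}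
    (hx0 : 0 ≤ x)
    (hx : x < w / 2 * (w / (1 - w) + Real.sqrt ((w / (1 - w)) ^ 2 + 4 * w / (1 - w)))) :
    ∃ α ∈ S, ∃ β, 0 < α ∧ α < 1 ∧ x < β ∧
      (1 - α) * β < α ∧ (1 - α) * β ^ 2 < α ^ 2 * β + α ^ 3 := by
  obtain ⟨β, hxβ, hβ⟩ := exists_between hx
  have hβ0 : 0 < β := lt_of_le_of_lt hx0 hxβ
  have hu : 0 < 1 - w := by linarith
  obtain ⟨a, ha⟩ : ∃ a, a = w / (1 - w) := ⟨_, rfl⟩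
  have haw : a * (1 - w) = w := by rw [ha]; field_simp
  have ha0 : 0 < a := by rw [ha]; positivity
  rw [mul_div_assoc, ← ha] at hβ
  obtain ⟨g, hg⟩ : ∃ g, g = β / w := ⟨_, rfl⟩
  have hgβ : β = g * w := by rw [hg]; field_simp
  have hg0 : 0 < g := by rw [hg]; positivity
  have hgs : 2 * g - a < Real.sqrt (a ^ 2 + 4 * a) := by
    rw [hgβ] at hβ
    have : w * (2 * g) < w * (a + Real.sqrt (a ^ 2 + 4 * a)) := by linarith
    linarith [lt_of_mul_lt_mul_left this hw0.le]
  have hsq : (2 * g - a) ^ 2 < a ^ 2 + 4 * a := by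
    rcases le_or_gt 0 (2 * g - a) with h | h
    · exact (Real.lt_sqrt h).1 hgs
    · nlinarith
  have hg2 : (1 - w) * g ^ 2 < w * (g + 1) := by
    have : g ^ 2 < a * (g + 1) := by nlinarith
    have := mul_lt_mul_of_pos_left this hu
    calc _ < _ := this
      _ = (a * (1 - w)) * (g + 1) := by ring
      _ = _ := by rw [haw]
  have hg1 : (1 - w) * g < 1 := by
    by_contra! h
    nlinarith [mul_le_mul_of_nonneg_right h hg0.le]
  have k1 : (1 - w) * β < w := by rw [hgβ]; nlinarith
  have k2 : (1 - w) * β ^ 2 < w ^ 2 * β + w ^ 3 := by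
    rw [hgβ]
    have := mul_lt_mul_of_pos_left hg2 (pow_pos hw0 2)
    linarith
  have hopen : IsOpen {α : ℝ | 0 < α ∧ (1 - α) * β < α ∧ (1 - α) * β ^ 2 < α ^ 2 * β + α ^ 3} := by
    refine (isOpen_lt (by fun_prop) (by fun_prop)).and
      ((isOpen_lt (by fun_prop) (by fun_prop)).and (isOpen_lt (by fun_prop) (by fun_prop)))
  obtain ⟨ε, hε, hball⟩ := Metric.isOpen_iff.1 hopen w ⟨hw0, k1, k2⟩
  obtain ⟨α, hαS, hαl, hαw⟩ := hw.exists_between (sub_lt_self w hε)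
  obtain ⟨p1, p2, p3⟩ := hball (show α ∈ Metric.ball w ε by
    rw [Metric.mem_ball, Real.dist_eq, abs_lt]; constructor <;> linarith)
  exact ⟨α, hαS, β, p1, by linarith, hxβ, p2, p3⟩

theorem rhs_nonpos {w : ℝ} (hw : w ≤ 0 ∨ 1 ≤ w) (hw0 : 0 ≤ w) :
    w / 2 * (w / (1 - w) + Real.sqrt ((w / (1 - w)) ^ 2 + 4 * w / (1 - w))) ≤ 0 := by
  have ha : w / (1 - w) ≤ 0 := by
    rcases hw with h | h
    · rw [le_antisymm h hw0]; simp
    · exact div_nonpos_of_nonneg_of_nonpos hw0 (by linarith)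
  rw [mul_div_assoc]
  generalize w / (1 - w) = a at ha
  have : Real.sqrt (a ^ 2 + 4 * a) ≤ -a := by
    rw [Real.sqrt_le_left (by linarith)]
    nlinarith
  exact mul_nonpos_of_nonneg_of_nonpos (by linarith) (by linarith)

/-- The quality `max_j ‖n θ_j‖` of the denominator `n`. -/
noncomputable def supDist (θ : Fin 3 → ℝ) (n : ℕ) : ℝ :=
  max (nint (n * θ 0)) (max (nint (n * θ 1)) (nint (n * θ 2)))

/-- The integer vector `(n, a_0, a_1, a_2)` with `a_j` nearest to `n θ_j`. -/
noncomputable def approxVec (θ : Fin 3 → ℝ) (n : ℕ) : Fin 4 → ℤ :=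
  Fin.cons (n : ℤ) fun j => round (n * θ j)

/-- The error `w_{j+1} - w_0 θ_j` of an integer vector in the `j`-th coordinate. -/
noncomputable def approxErr (θ : Fin 3 → ℝ) (w : Fin 4 → ℤ) (j : Fin 3) : ℝ :=
  w j.succ - w 0 * θ j

theorem nint_nonneg (x : ℝ) : 0 ≤ nint x := abs_nonneg _

theorem nint_le_abs_sub (x : ℝ) (m : ℤ) : nint x ≤ |x - m| := round_le x m

theorem nint_le_half (x : ℝ) : nint x ≤ 1 / 2 := abs_sub_round x

theorem nint_le_supDist (θ : Fin 3 → ℝ) (n : ℕ) (j : Fin 3) : nint (n * θ j) ≤ supDist θ n := by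
  fin_cases j <;> simp [supDist]

theorem supDist_le_iff {θ : Fin 3 → ℝ} {n : ℕ} {B : ℝ} :
    supDist θ n ≤ B ↔ ∀ j, nint (n * θ j) ≤ B := by
  simp [supDist, Fin.forall_fin_succ]

theorem exists_nint_eq_supDist (θ : Fin 3 → ℝ) (n : ℕ) : ∃ j, nint (n * θ j) = supDist θ n := by
  by_contra! h
  have h1 : ∀ j, nint (n * θ j) < supDist θ n := fun j => (nint_le_supDist θ n j).lt_of_ne (h j)
  have := h1 0
  have := h1 1
  have := h1 2
  have : supDist θ n < supDist θ n := by
    conv_lhs => rw [supDist]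
    simp only [max_lt_iff]
    tauto
  exact this.false

theorem supDist_le_half (θ : Fin 3 → ℝ) (n : ℕ) : supDist θ n ≤ 1 / 2 :=
  supDist_le_iff.2 fun _ => nint_le_half _

theorem abs_approxErr_approxVec (θ : Fin 3 → ℝ) (n : ℕ) (j : Fin 3) :
    |approxErr θ (approxVec θ n) j| = nint (n * θ j) := by
  simp [approxErr, approxVec, nint, abs_sub_comm]

theorem nint_natAbs_le (θ : Fin 3 → ℝ) (w : Fin 4 → ℤ) (j : Fin 3) :
    nint ((w 0).natAbs * θ j) ≤ |approxErr θ w j| := by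
  rcases Int.natAbs_eq (w 0) with h | h
  · have h' : ((w 0 : ℤ) : ℝ) = ((w 0).natAbs : ℝ) := by
      have := congrArg (Int.cast (R := ℝ)) h
      rwa [Int.cast_natCast] at this
    have := nint_le_abs_sub ((w 0).natAbs * θ j) (w j.succ)
    rwa [approxErr, abs_sub_comm, h']
  · have h' : ((w 0 : ℤ) : ℝ) = -((w 0).natAbs : ℝ) := by
      exact_mod_cast congrArg (Int.cast (R := ℝ)) h
    have := nint_le_abs_sub ((w 0).natAbs * θ j) (-w j.succ)
    rw [approxErr, h']
    push_cast at this
    convert this using 2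
    ring

theorem psi3_eq (θ : Fin 3 → ℝ) (t : ℝ) :
    psi3 θ t = sInf (supDist θ '' {n : ℕ | 1 ≤ n ∧ (n : ℝ) ≤ t}) := by
  rw [psi3]
  congr 1
  ext v
  constructor
  · rintro ⟨x, hx, hxt, rfl⟩
    lift x to ℕ using hx.le
    exact ⟨x, ⟨by omega, by exact_mod_cast hxt⟩, by simp [supDist]⟩
  · rintro ⟨n, ⟨h1, h2⟩, rfl⟩
    exact ⟨n, by omega, by exact_mod_cast h2, by simp [supDist]⟩

theorem supDist_nonneg (θ : Fin 3 → ℝ) (n : ℕ) : 0 ≤ supDist θ n :=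
  (nint_nonneg _).trans (nint_le_supDist θ n 0)

theorem psi3_le_supDist (θ : Fin 3 → ℝ) {t : ℝ} {n : ℕ} (h1 : 1 ≤ n) (h2 : (n : ℝ) ≤ t) :
    psi3 θ t ≤ supDist θ n := by
  rw [psi3_eq]
  refine csInf_le ⟨0, ?_⟩ ⟨n, ⟨h1, h2⟩, rfl⟩
  rintro _ ⟨n, -, rfl⟩
  exact supDist_nonneg θ n

theorem exists_psi3_eq_supDist (θ : Fin 3 → ℝ) {t : ℝ} (ht : 1 ≤ t) :
    ∃ n : ℕ, 1 ≤ n ∧ (n : ℝ) ≤ t ∧ psi3 θ t = supDist θ n := by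
  have hfin : {n : ℕ | 1 ≤ n ∧ (n : ℝ) ≤ t}.Finite :=
    (Set.finite_Iic ⌊t⌋₊).subset fun n hn => Nat.le_floor hn.2
  have hne : {n : ℕ | 1 ≤ n ∧ (n : ℝ) ≤ t}.Nonempty := ⟨1, le_rfl, by simpa using ht⟩
  obtain ⟨n, ⟨h1, h2⟩, h3⟩ := (hne.image (supDist θ)).csInf_mem (hfin.image _)
  exact ⟨n, h1, h2, by rw [psi3_eq, h3]⟩

theorem eq_zero_of_rational_relation {θ : Fin 3 → ℝ}
    (hindep : LinearIndependent ℚ ![(1 : ℝ), θ 0, θ 1, θ 2]) (c : Fin 4 → ℚ)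
    (hc : (c 0 : ℝ) + ∑ j, (c (Fin.succ j) : ℝ) * θ j = 0) : c = 0 := by
  funext i
  refine Fintype.linearIndependent_iff.1 hindep c ?_ i
  rw [← hc]
  simp [Fin.sum_univ_succ, Rat.smul_def]

theorem supDist_pos {θ : Fin 3 → ℝ}
    (hindep : LinearIndependent ℚ ![(1 : ℝ), θ 0, θ 1, θ 2]) {n : ℕ} (hn : 1 ≤ n) :
    0 < supDist θ n := by
  refine lt_of_lt_of_le (abs_pos.2 fun h => ?_) (nint_le_supDist θ n 0)
  have := eq_zero_of_rational_relation hindep ![-(round (n * θ 0) : ℤ), n, 0, 0] (by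
    simp [Fin.sum_univ_succ]
    linarith)
  have := congrFun this 1
  simp at this
  omega

/-- `q` enumerates the denominators of the successive best approximations to `θ`. -/
structure IsRecordSeq (θ : Fin 3 → ℝ) (q : ℕ → ℕ) : Prop where
  strictMono : StrictMono q
  one_le : ∀ j, 1 ≤ q j
  supDist_lt : ∀ j, supDist θ (q (j + 1)) < supDist θ (q j)
  le_supDist : ∀ j x, 1 ≤ x → x < q (j + 1) → supDist θ (q j) ≤ supDist θ x
  supDist_pos : ∀ j, 0 < supDist θ (q j)

namespace IsRecordSeq

variable {θ : Fin 3 → ℝ} {q : ℕ → ℕ}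

theorem antitone (h : IsRecordSeq θ q) : Antitone fun j => supDist θ (q j) :=
  antitone_nat_of_succ_le fun j => (h.supDist_lt j).le

theorem cast_lt (h : IsRecordSeq θ q) (j : ℕ) : (q j : ℝ) < q (j + 1) := by
  exact_mod_cast h.strictMono (Nat.lt_succ_self j)

theorem cast_pos (h : IsRecordSeq θ q) (j : ℕ) : (0 : ℝ) < q j := by
  exact_mod_cast h.one_le j

theorem abs_approxErr_le (θ : Fin 3 → ℝ) (n : ℕ) (j : Fin 3) :
    |approxErr θ (approxVec θ n) j| ≤ supDist θ n := by
  rw [abs_approxErr_approxVec]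
  exact nint_le_supDist θ n j

/-- Minimality: a shorter integer vector with smaller errors vanishes. -/
theorem eq_zero_of_small (h : IsRecordSeq θ q) (j : ℕ) (w : Fin 4 → ℤ)
    (h0 : |(w 0 : ℝ)| < q (j + 1)) (he : ∀ l, |approxErr θ w l| < supDist θ (q j)) : w = 0 := by
  have hw0 : w 0 = 0 := by
    by_contra hne
    have h1 : 1 ≤ (w 0).natAbs := Int.natAbs_pos.2 hne
    have h2 : (w 0).natAbs < q (j + 1) := by
      have : (((w 0).natAbs : ℕ) : ℝ) < q (j + 1) := by rwa [Nat.cast_natAbs, Int.cast_abs]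
      exact_mod_cast this
    obtain ⟨l, hl⟩ := exists_nint_eq_supDist θ (w 0).natAbs
    have := h.le_supDist j _ h1 h2
    have := nint_natAbs_le θ w l
    have := he l
    linarith
  funext i
  refine Fin.cases hw0 (fun l => ?_) i
  have h1 := he l
  rw [approxErr, hw0] at h1
  have h2 := supDist_le_half θ (q j)
  have h3 : |(w l.succ : ℝ)| < 1 := by
    simp only [Int.cast_zero, zero_mul, sub_zero] at h1
    linarith
  exact Int.abs_lt_one_iff.1 (by exact_mod_cast h3)

/-- Consecutive best approximations form a basis of the integer points of their plane. -/
theorem exists_int_combination (h : IsRecordSeq θ q) (j : ℕ) (w : Fin 4 → ℤ) (s t : ℚ)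
    (hw : ∀ i, (w i : ℚ) = s * approxVec θ (q j) i + t * approxVec θ (q (j + 1)) i) :
    ∃ m n : ℤ, ∀ i, w i = m * approxVec θ (q j) i + n * approxVec θ (q (j + 1)) i := by
  refine ⟨round s, round t, fun i => ?_⟩
  set u := approxVec θ (q j) with hu
  set v := approxVec θ (q (j + 1)) with hv
  have hs : |((s - round s : ℚ) : ℝ)| ≤ 1 / 2 := by
    have := (Rat.cast_le (K := ℝ)).2 (abs_sub_round s)
    rw [Rat.cast_abs] at this
    simpa using this
  have ht : |((t - round t : ℚ) : ℝ)| ≤ 1 / 2 := by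
    have := (Rat.cast_le (K := ℝ)).2 (abs_sub_round t)
    rw [Rat.cast_abs] at this
    simpa using this
  have hR : ∀ i, (w i : ℝ) - (round s * u i + round t * v i) =
      ((s - round s : ℚ) : ℝ) * u i + ((t - round t : ℚ) : ℝ) * v i := by
    intro i
    have := congrArg (Rat.cast (K := ℝ)) (hw i)
    push_cast at this ⊢
    rw [this]
    ring
  generalize ((s - round s : ℚ) : ℝ) = s' at hs hR
  generalize ((t - round t : ℚ) : ℝ) = t' at ht hR
  have key : ∀ x y X Y : ℝ, |x| ≤ X → |y| ≤ Y → |s' * x + t' * y| ≤ (X + Y) / 2 := by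
    intro x y X Y hx hy
    calc |s' * x + t' * y| ≤ |s'| * |x| + |t'| * |y| := by
          rw [← abs_mul, ← abs_mul]; exact abs_add_le _ _
      _ ≤ 1 / 2 * X + 1 / 2 * Y := by gcongr
      _ = _ := by ring
  have hz := h.eq_zero_of_small j (fun i => w i - (round s * u i + round t * v i)) (by
    push_cast
    rw [hR]
    have hu0 : |(u 0 : ℝ)| ≤ q j := by simp [hu, approxVec]
    have hv0 : |(v 0 : ℝ)| ≤ q (j + 1) := by simp [hv, approxVec]
    have := key _ _ _ _ hu0 hv0
    have := h.cast_lt j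
    linarith) (fun l => by
    have : approxErr θ (fun i => w i - (round s * u i + round t * v i)) l =
        s' * approxErr θ u l + t' * approxErr θ v l := by
      simp only [approxErr]
      push_cast
      rw [hR, hR]
      ring
    rw [this]
    have := key _ _ _ _ (abs_approxErr_le θ (q j) l) (abs_approxErr_le θ (q (j + 1)) l)
    have := h.supDist_lt j
    linarith)
  have := congrFun hz i
  simp only [Pi.zero_apply] at this
  omega

end IsRecordSeq

/-- The `(0, l + 1)` minor of a pair of integer vectors. -/
def planeMinor (u v : Fin 4 → ℤ) (l : Fin 3) : ℤ := u 0 * v l.succ - v 0 * u l.succ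

theorem planeMinor_eq_approxErr (θ : Fin 3 → ℝ) (u v : Fin 4 → ℤ) (l : Fin 3) :
    (planeMinor u v l : ℝ) = u 0 * approxErr θ v l - v 0 * approxErr θ u l := by
  simp only [planeMinor, approxErr]
  push_cast
  ring

namespace IsRecordSeq

variable {θ : Fin 3 → ℝ} {q : ℕ → ℕ}

theorem abs_planeMinor_le (h : IsRecordSeq θ q) (j : ℕ) (l : Fin 3) :
    |(planeMinor (approxVec θ (q j)) (approxVec θ (q (j + 1))) l : ℝ)| ≤
      2 * (supDist θ (q j) * q (j + 1)) := by
  rw [planeMinor_eq_approxErr θ]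
  have h1 := abs_approxErr_le θ (q j) l
  have h2 := (abs_approxErr_le θ (q (j + 1)) l).trans (h.supDist_lt j).le
  have h3 := h.cast_lt j
  have h4 := h.cast_pos j
  simp only [approxVec, Fin.cons_zero, Int.cast_natCast]
  refine (abs_sub _ _).trans ?_
  rw [abs_mul, abs_mul, Nat.abs_cast, Nat.abs_cast]
  have := h.supDist_pos j
  calc (q j : ℝ) * _ + q (j + 1) * _
      ≤ q (j + 1) * supDist θ (q j) + q (j + 1) * supDist θ (q j) := by
        gcongr
        · exact h2
        · exact h1
    _ = _ := by ring

theorem exists_le_abs_planeMinor (h : IsRecordSeq θ q) (j : ℕ) :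
    ∃ l, supDist θ (q j) * q (j + 1) ≤
      3 * |(planeMinor (approxVec θ (q j)) (approxVec θ (q (j + 1))) l : ℝ)| := by
  have hlt := h.cast_lt j
  have hpos := h.cast_pos j
  have hz := h.supDist_pos j
  set u := approxVec θ (q j) with hu
  set v := approxVec θ (q (j + 1)) with hv
  have hu0 : (u 0 : ℝ) = q j := by simp [hu, approxVec]
  have hv0 : (v 0 : ℝ) = q (j + 1) := by simp [hv, approxVec]
  rcases le_or_gt (3 * (q j : ℝ)) (2 * q (j + 1)) with hc | hc
  · obtain ⟨l, hl⟩ := exists_nint_eq_supDist θ (q j)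
    refine ⟨l, ?_⟩
    rw [planeMinor_eq_approxErr θ, hu0, hv0]
    rw [← abs_approxErr_approxVec, ← hu] at hl
    have h2 : |approxErr θ v l| ≤ supDist θ (q j) :=
      (abs_approxErr_le θ (q (j + 1)) l).trans (h.supDist_lt j).le
    have h3 := abs_sub_abs_le_abs_sub (q (j + 1) * approxErr θ u l) (q j * approxErr θ v l)
    rw [abs_sub_comm, abs_mul, abs_mul, Nat.abs_cast, Nat.abs_cast, hl] at h3
    nlinarith [mul_le_mul_of_nonneg_left h2 hpos.le]
  · set w : Fin 4 → ℤ := fun i => v i - u i with hw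
    have hex : ∃ l, supDist θ (q j) ≤ |approxErr θ w l| := by
      by_contra! hcon
      have := h.eq_zero_of_small j w (by
        simp only [hw]
        push_cast
        rw [hu0, hv0, abs_of_pos (by linarith)]
        linarith) hcon
      have h0 := congrArg (Int.cast (R := ℝ)) (congrFun this 0)
      simp only [hw, Pi.zero_apply] at h0
      push_cast at h0
      rw [hu0, hv0] at h0
      linarith
    obtain ⟨l, hl⟩ := hex
    refine ⟨l, ?_⟩
    have he : approxErr θ w l = approxErr θ v l - approxErr θ u l := by
      simp only [approxErr, hw]
      push_cast
      ring
    rw [planeMinor_eq_approxErr θ, hu0, hv0,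
      show q j * approxErr θ v l - q (j + 1) * approxErr θ u l =
        q j * approxErr θ w l - (q (j + 1) - q j) * approxErr θ u l by rw [he]; ring]
    have h1 := abs_approxErr_le θ (q j) l
    rw [← hu] at h1
    have h3 := abs_sub_abs_le_abs_sub (q j * approxErr θ w l)
      ((q (j + 1) - q j) * approxErr θ u l)
    rw [abs_mul, abs_mul, Nat.abs_cast, abs_of_pos (sub_pos.2 hlt)] at h3
    nlinarith [mul_le_mul_of_nonneg_left hl hpos.le,
      mul_le_mul_of_nonneg_left h1 (sub_pos.2 hlt).le]

/-- If the plane of the `i`-th and `(i+1)`-st best approximation is that of the `k`-th and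
`(k+1)`-st one, then its covolume bounds `ζ_k q_{k+1}` by `ζ_i q_{i+1}`. -/
theorem area_le (h : IsRecordSeq θ q) (i k : ℕ)
    (h1 : (fun l => (approxVec θ (q i) l : ℚ)) ∈ Submodule.span ℚ
      {(fun l => (approxVec θ (q k) l : ℚ)), fun l => (approxVec θ (q (k + 1)) l : ℚ)})
    (h2 : (fun l => (approxVec θ (q (i + 1)) l : ℚ)) ∈ Submodule.span ℚ
      {(fun l => (approxVec θ (q k) l : ℚ)), fun l => (approxVec θ (q (k + 1)) l : ℚ)}) :
    supDist θ (q k) * q (k + 1) ≤ 6 * (supDist θ (q i) * q (i + 1)) := by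
  rw [Submodule.mem_span_pair] at h1 h2
  obtain ⟨s, t, hst⟩ := h1
  obtain ⟨s', t', hst'⟩ := h2
  obtain ⟨a, b, hab⟩ := h.exists_int_combination k (approxVec θ (q i)) s t
    (fun l => (congrFun hst l).symm)
  obtain ⟨c, d, hcd⟩ := h.exists_int_combination k (approxVec θ (q (i + 1))) s' t'
    (fun l => (congrFun hst' l).symm)
  have hdet : ∀ l, planeMinor (approxVec θ (q i)) (approxVec θ (q (i + 1))) l =
      (a * d - b * c) * planeMinor (approxVec θ (q k)) (approxVec θ (q (k + 1))) l := by
    intro l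
    simp only [planeMinor, hab, hcd]
    ring
  have hne : a * d - b * c ≠ 0 := by
    intro h0
    obtain ⟨l, hl⟩ := h.exists_le_abs_planeMinor i
    rw [hdet, h0] at hl
    simp only [zero_mul, Int.cast_zero, abs_zero, mul_zero] at hl
    exact absurd hl (not_le.2 (mul_pos (h.supDist_pos i) (h.cast_pos _)))
  have hge : (1 : ℝ) ≤ |((a * d - b * c : ℤ) : ℝ)| := by
    exact_mod_cast Int.one_le_abs hne
  obtain ⟨l, hl⟩ := h.exists_le_abs_planeMinor k
  have h3 := h.abs_planeMinor_le i l
  rw [hdet, Int.cast_mul, abs_mul] at h3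
  nlinarith [mul_le_mul_of_nonneg_right hge
    (abs_nonneg ((planeMinor (approxVec θ (q k)) (approxVec θ (q (k + 1))) l : ℤ) : ℝ))]

theorem linearIndependent_consecutive (h : IsRecordSeq θ q) (j : ℕ) :
    LinearIndependent ℚ ![(fun l => (approxVec θ (q j) l : ℚ)),
      fun l => (approxVec θ (q (j + 1)) l : ℚ)] := by
  rw [LinearIndependent.pair_iff]
  intro s t hst
  obtain ⟨l, hl⟩ := h.exists_le_abs_planeMinor j
  have hne : (planeMinor (approxVec θ (q j)) (approxVec θ (q (j + 1))) l : ℚ) ≠ 0 := by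
    intro h0
    rw [Int.cast_eq_zero] at h0
    rw [h0] at hl
    simp only [Int.cast_zero, abs_zero, mul_zero] at hl
    exact absurd hl (not_le.2 (mul_pos (h.supDist_pos j) (h.cast_pos _)))
  have e0 := congrFun hst 0
  have e1 := congrFun hst l.succ
  simp only [Pi.add_apply, Pi.smul_apply, smul_eq_mul, Pi.zero_apply] at e0 e1
  rw [planeMinor] at hne
  push_cast at hne
  constructor
  · refine (mul_eq_zero.1 ?_).resolve_right hne
    linear_combination (approxVec θ (q (j + 1)) l.succ : ℚ) * e0 -
      (approxVec θ (q (j + 1)) 0 : ℚ) * e1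
  · refine (mul_eq_zero.1 ?_).resolve_right hne
    linear_combination (approxVec θ (q j) 0 : ℚ) * e1 - (approxVec θ (q j) l.succ : ℚ) * e0

theorem span_tail_eq_top (h : IsRecordSeq θ q)
    (hindep : LinearIndependent ℚ ![(1 : ℝ), θ 0, θ 1, θ 2]) (N : ℕ) :
    Submodule.span ℚ ((fun (j : ℕ) (l : Fin 4) => (approxVec θ (q j) l : ℚ)) '' Set.Ici N) = ⊤ := by
  by_contra hne
  obtain ⟨f, hf0, hf⟩ := Submodule.exists_le_ker_of_lt_top _ (lt_top_iff_ne_top.2 hne)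
  let c : Fin 4 → ℚ := fun i => f (Pi.single i 1)
  have hfc : ∀ w : Fin 4 → ℚ, f w = ∑ i, w i * c i := by
    intro w
    conv_lhs => rw [pi_eq_sum_univ' w, map_sum]
    simp only [map_smul, smul_eq_mul]
    rfl
  have hc : c = 0 := by
    apply eq_zero_of_rational_relation hindep
    by_contra hL
    set L : ℝ := (c 0 : ℝ) + ∑ j, (c (Fin.succ j) : ℝ) * θ j with hLdef
    have hbound : ∀ j, N ≤ j → (q j : ℝ) * |L| ≤ ∑ l : Fin 3, |(c l.succ : ℝ)| := by
      intro j hj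
      have hz : f (fun l => (approxVec θ (q j) l : ℚ)) = 0 :=
        hf (Submodule.subset_span ⟨j, hj, rfl⟩)
      rw [hfc, Fin.sum_univ_succ] at hz
      have hz' := congrArg (Rat.cast (K := ℝ)) hz
      push_cast at hz'
      have h0 : ((approxVec θ (q j) 0 : ℤ) : ℝ) = q j := by simp [approxVec]
      have : (q j : ℝ) * L = -∑ l : Fin 3, (c l.succ : ℝ) * approxErr θ (approxVec θ (q j)) l := by
        simp only [approxErr, hLdef, h0, Fin.sum_univ_three] at hz' ⊢
        linarith
      rw [← Nat.abs_cast (q j), ← abs_mul, this, abs_neg]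
      refine (Finset.abs_sum_le_sum_abs _ _).trans (Finset.sum_le_sum fun l _ => ?_)
      rw [abs_mul]
      refine mul_le_of_le_one_right (abs_nonneg _) ?_
      linarith [abs_approxErr_le θ (q j) l, supDist_le_half θ (q j)]
    obtain ⟨m, hm⟩ := exists_nat_gt ((∑ l : Fin 3, |(c l.succ : ℝ)|) / |L|)
    rw [div_lt_iff₀ (abs_pos.2 hL)] at hm
    have h1 := hbound (max N m) (le_max_left _ _)
    have h2 : (m : ℝ) ≤ q (max N m) := by
      exact_mod_cast (le_max_right N m).trans (h.strictMono.id_le _)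
    have := mul_le_mul_of_nonneg_right h2 (abs_nonneg L)
    linarith
  apply hf0
  ext w
  simp [hfc, hc]

end IsRecordSeq

theorem abs_det_le_of_bounds (A : Matrix (Fin 4) (Fin 4) ℝ) (Q Z : Fin 4 → ℝ)
    (hQ : ∀ r, |A r 0| ≤ Q r) (hZ : ∀ r (j : Fin 3), |A r j.succ| ≤ Z r) (hZpos : ∀ r, 0 < Z r)
    (hQ0 : ∀ r, Q r ≤ Q 0) (hZ0 : ∀ r, Z 0 ≤ Z r) :
    |A.det| ≤ 24 * (Q 0 * Z 1 * Z 2 * Z 3) := by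
  have hterm : ∀ σ : Equiv.Perm (Fin 4), |((Equiv.Perm.sign σ : ℤ) : ℝ) * ∏ i, A (σ i) i| ≤
      Q 0 * Z 1 * Z 2 * Z 3 := by
    intro σ
    have hs : |((Equiv.Perm.sign σ : ℤ) : ℝ)| = 1 := by
      rcases Int.units_eq_one_or (Equiv.Perm.sign σ) with h | h <;> simp [h]
    have hQnn : ∀ r, 0 ≤ Q r := fun r => (abs_nonneg _).trans (hQ r)
    rw [abs_mul, hs, one_mul, Finset.abs_prod, Fin.prod_univ_succ]
    have h1 : |A (σ 0) 0| * ∏ i : Fin 3, |A (σ i.succ) i.succ| ≤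
        Q (σ 0) * ∏ i : Fin 3, Z (σ i.succ) := by
      refine mul_le_mul (hQ _) (Finset.prod_le_prod (fun _ _ => abs_nonneg _) fun i _ => hZ _ _)
        (Finset.prod_nonneg fun _ _ => abs_nonneg _) (hQnn _)
    refine h1.trans (le_of_mul_le_mul_right ?_ (hZpos (σ 0)))
    have h2 : Z (σ 0) * ∏ i : Fin 3, Z (σ i.succ) = Z 0 * (Z 1 * Z 2 * Z 3) := by
      rw [← Fin.prod_univ_succ (fun i => Z (σ i)), Equiv.prod_comp σ Z, Fin.prod_univ_four]
      ring
    have h3 : 0 < Z 1 * Z 2 * Z 3 := mul_pos (mul_pos (hZpos _) (hZpos _)) (hZpos _)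
    calc Q (σ 0) * (∏ i : Fin 3, Z (σ i.succ)) * Z (σ 0)
        = Q (σ 0) * (Z 0 * (Z 1 * Z 2 * Z 3)) := by rw [← h2]; ring
      _ ≤ Q 0 * (Z (σ 0) * (Z 1 * Z 2 * Z 3)) :=
          mul_le_mul (hQ0 _) (mul_le_mul_of_nonneg_right (hZ0 _) h3.le)
            (mul_pos (hZpos _) h3).le (hQnn _)
      _ = _ := by ring
  rw [Matrix.det_apply']
  refine (Finset.abs_sum_le_sum_abs _ _).trans ((Finset.sum_le_card_nsmul _ _ _
    fun σ _ => hterm σ).trans (le_of_eq ?_))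
  rw [Finset.card_univ, Fintype.card_perm, Fintype.card_fin, nsmul_eq_mul]
  norm_num [Nat.factorial]

theorem det_eq_det_approxErr (θ : Fin 3 → ℝ) (w : Fin 4 → Fin 4 → ℤ) :
    ((Matrix.of w).det : ℝ) =
      (Matrix.of fun r => (Fin.cons (w r 0 : ℝ) (approxErr θ (w r)) : Fin 4 → ℝ)).det := by
  rw [Int.cast_det, ← Matrix.det_transpose, ← Matrix.det_transpose (Matrix.of fun r => Fin.cons _ _)]
  refine (Matrix.det_eq_of_forall_row_eq_smul_add_const (Fin.cons 0 fun j => -θ j) 0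
    (by simp) fun i r => ?_).symm
  refine Fin.cases ?_ (fun j => ?_) i
  · simp
  · simp [approxErr]
    ring

theorem IsRecordSeq.one_le_of_linearIndependent {θ : Fin 3 → ℝ} {q : ℕ → ℕ}
    (h : IsRecordSeq θ q) {i k : ℕ} (hik : i < k)
    (hli : LinearIndependent ℚ ![(fun l => (approxVec θ (q (k + 2)) l : ℚ)),
      fun l => (approxVec θ (q i) l : ℚ), fun l => (approxVec θ (q k) l : ℚ),
      fun l => (approxVec θ (q (k + 1)) l : ℚ)]) :
    1 ≤ 24 * (q (k + 2) * supDist θ (q i) * supDist θ (q k) * supDist θ (q (k + 1))) := by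
  let n : Fin 4 → ℕ := ![k + 2, i, k, k + 1]
  have hn : ∀ r, n r ≤ k + 2 := by
    intro r
    fin_cases r <;> simp [n]; all_goals omega
  let w : Fin 4 → Fin 4 → ℤ := fun r => approxVec θ (q (n r))
  have hdet : (Matrix.of w).det ≠ 0 := by
    intro h0
    have hli' : LinearIndependent ℚ ((Matrix.of w).map (Int.castRingHom ℚ)).row := by
      convert hli using 1
      funext r
      fin_cases r <;> rfl
    have := (Matrix.isUnit_iff_isUnit_det _).1
      (Matrix.linearIndependent_rows_iff_isUnit.1 hli')
    rw [← RingHom.mapMatrix_apply, ← RingHom.map_det, h0, map_zero] at this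
    exact not_isUnit_zero this
  have h1 : (1 : ℝ) ≤ |((Matrix.of w).det : ℝ)| := by exact_mod_cast Int.one_le_abs hdet
  rw [det_eq_det_approxErr θ] at h1
  refine h1.trans (abs_det_le_of_bounds _ (fun r => (q (n r) : ℝ)) (fun r => supDist θ (q (n r)))
    (fun r => ?_) (fun r j => ?_) (fun r => h.supDist_pos _) (fun r => ?_) fun r => ?_)
  · simp [w, approxVec]
  · simpa [w] using abs_approxErr_le θ (q (n r)) j
  · exact_mod_cast h.strictMono.monotone (hn r)
  · exact h.antitone (hn r)

theorem exists_isRecordSeq {θ : Fin 3 → ℝ}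
    (hindep : LinearIndependent ℚ ![(1 : ℝ), θ 0, θ 1, θ 2]) {α C : ℝ} (hα : 0 < α)
    (hC : ∀ᶠ t : ℝ in atTop, t ^ α * psi3 θ t ≤ C) : ∃ q, IsRecordSeq θ q := by
  obtain ⟨q, h1, h2, h3, h4⟩ := exists_record_sequence (supDist θ)
    (fun n hn => supDist_pos hindep hn) fun ε hε => by
      obtain ⟨t, ht, htC, ht1⟩ := (hC.and (((tendsto_rpow_atTop hα).eventually_gt_atTop
        (C / ε)).and (eventually_ge_atTop 1))).exists
      obtain ⟨n, hn1, -, hn⟩ := exists_psi3_eq_supDist θ ht1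
      refine ⟨n, hn1, ?_⟩
      rw [← hn]
      rw [div_lt_iff₀ hε] at htC
      exact lt_of_mul_lt_mul_left (ht.trans_lt htC) (Real.rpow_nonneg (by linarith) _)
  exact ⟨q, h1, h2, h3, h4, fun j => supDist_pos hindep (h2 j)⟩

namespace IsRecordSeq

variable {θ : Fin 3 → ℝ} {q : ℕ → ℕ}

theorem exists_log_supDist_le (h : IsRecordSeq θ q) {α C : ℝ} (hα : 0 < α)
    (hC : ∀ᶠ t : ℝ in atTop, t ^ α * psi3 θ t ≤ C) :
    ∃ c : ℝ, ∀ᶠ j in atTop, Real.log (supDist θ (q j)) ≤ c - α * Real.log (q (j + 1)) := by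
  refine ⟨Real.log C + α * Real.log 2, ?_⟩
  have hq : Tendsto (fun j => (q (j + 1) : ℝ) - 1) atTop atTop :=
    tendsto_atTop_add_const_right _ _ (tendsto_natCast_atTop_atTop.comp
      (h.strictMono.tendsto_atTop.comp (tendsto_add_atTop_nat 1)))
  filter_upwards [hq.eventually hC] with j hj
  have hlt := h.strictMono (Nat.lt_succ_self j)
  have h1 := h.one_le j
  have h2 : (2 : ℝ) ≤ q (j + 1) := by
    have : 2 ≤ q (j + 1) := by simp only [Nat.succ_eq_add_one] at hlt; omega
    exact_mod_cast this
  have ht : (1 : ℝ) ≤ q (j + 1) - 1 := by linarith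
  obtain ⟨n, hn1, hn2, hn⟩ := exists_psi3_eq_supDist θ ht
  have hnq : n < q (j + 1) := by
    have : (n : ℝ) < q (j + 1) := by linarith
    exact_mod_cast this
  have hz := h.supDist_pos j
  have hle := h.le_supDist j n hn1 hnq
  rw [hn] at hj
  have hpos : 0 < ((q (j + 1) : ℝ) - 1) ^ α := Real.rpow_pos_of_pos (by linarith) _
  have hlog := Real.log_le_log (mul_pos hpos hz)
    ((mul_le_mul_of_nonneg_left hle hpos.le).trans hj)
  rw [Real.log_mul hpos.ne' hz.ne', Real.log_rpow (by linarith)] at hlog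
  have h3 : Real.log (q (j + 1)) ≤ Real.log 2 + Real.log ((q (j + 1) : ℝ) - 1) := by
    rw [← Real.log_mul two_ne_zero (by linarith)]
    exact Real.log_le_log (by linarith) (by linarith)
  nlinarith [mul_le_mul_of_nonneg_left h3 hα.le]

theorem eventually_log_pos (h : IsRecordSeq θ q) {β : ℝ}
    (hβ : ∀ᶠ t : ℝ in atTop, 1 < t ^ β * psi3 θ t) :
    ∀ᶠ j in atTop, 0 < β * Real.log (q j) + Real.log (supDist θ (q j)) := by
  filter_upwards [(tendsto_natCast_atTop_atTop.comp h.strictMono.tendsto_atTop).eventually hβ]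
    with j hj
  have hq := h.cast_pos j
  have hz := h.supDist_pos j
  have hpos : 0 < (q j : ℝ) ^ β := Real.rpow_pos_of_pos hq _
  have h1 : 1 < (q j : ℝ) ^ β * supDist θ (q j) :=
    lt_of_lt_of_le hj (mul_le_mul_of_nonneg_left (psi3_le_supDist θ (h.one_le j) le_rfl) hpos.le)
  have := Real.log_pos h1
  rwa [Real.log_mul hpos.ne' hz.ne', Real.log_rpow hq] at this

end IsRecordSeq

/-- A uniform exponent `α` and a failing ordinary exponent `β` cannot satisfy the inequalities
characterising `β / α` below the regular-system ratio. -/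
theorem not_eventually_lt_rpow_mul_psi3 {θ : Fin 3 → ℝ}
    (hindep : LinearIndependent ℚ ![(1 : ℝ), θ 0, θ 1, θ 2]) {α β C : ℝ} (hα : 0 < α)
    (hα1 : α < 1) (hβ : 0 < β) (h1 : (1 - α) * β < α)
    (h2 : (1 - α) * β ^ 2 < α ^ 2 * β + α ^ 3)
    (hC : ∀ᶠ t : ℝ in atTop, t ^ α * psi3 θ t ≤ C) :
    ¬ ∀ᶠ t : ℝ in atTop, 1 < t ^ β * psi3 θ t := by
  intro hlow
  obtain ⟨q, h⟩ := exists_isRecordSeq hindep hα hC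
  obtain ⟨c, hc⟩ := h.exists_log_supDist_le hα hC
  obtain ⟨K, hK⟩ := exists_bound_of_log_constraints hα hα1 hβ h1 h2 c (Real.log 6) (Real.log 24)
  have hlogq : Tendsto (fun j => Real.log (q j)) atTop atTop :=
    Real.tendsto_log_atTop.comp (tendsto_natCast_atTop_atTop.comp h.strictMono.tendsto_atTop)
  obtain ⟨N, hN⟩ := eventually_atTop.1
    (hc.and ((h.eventually_log_pos hlow).and (hlogq.eventually_gt_atTop K)))
  obtain ⟨i, k, hNi, hik, hm1, hm2, hli⟩ := exists_independent_quadruple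
    (fun j l => (approxVec θ (q j) l : ℚ)) h.linearIndependent_consecutive
    (h.span_tail_eq_top hindep) N
  have harea := h.area_le (i + 1) k hm1 hm2
  have hdet := h.one_le_of_linearIndependent hik hli
  have hz := fun j => h.supDist_pos j
  have hz' := fun j => (h.supDist_pos j).ne'
  have hq := fun j => h.cast_pos j
  have hq' := fun j => (h.cast_pos j).ne'
  have harea' := Real.log_le_log (mul_pos (hz _) (hq _)) harea
  rw [Real.log_mul (hz' _) (hq' _), Real.log_mul (by norm_num) (mul_ne_zero (hz' _) (hq' _)),
    Real.log_mul (hz' _) (hq' _)] at harea'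
  have hdet' := Real.log_le_log one_pos hdet
  rw [Real.log_one, Real.log_mul (by norm_num)
      (mul_ne_zero (mul_ne_zero (mul_ne_zero (hq' _) (hz' _)) (hz' _)) (hz' _)),
    Real.log_mul (mul_ne_zero (mul_ne_zero (hq' _) (hz' _)) (hz' _)) (hz' _),
    Real.log_mul (mul_ne_zero (hq' _) (hz' _)) (hz' _), Real.log_mul (hq' _) (hz' _)] at hdet'
  have hBC : Real.log (q (i + 2)) ≤ Real.log (q (k + 1)) :=
    Real.log_le_log (hq _) (by exact_mod_cast h.strictMono.monotone (by omega))
  have hi := hN i hNi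
  have hi1 := hN (i + 1) (by omega)
  have hi2 := hN (i + 2) (by omega)
  have hk1 := hN (k + 1) (by omega)
  have := hK (Real.log (q (i + 1))) (Real.log (q (i + 2))) (Real.log (q (k + 1)))
    (Real.log (q (k + 2))) _ _ (Real.log (supDist θ (q k))) _ hBC hi.1 hi1.1 hk1.1
    (by linarith) (by linarith)
    (by linarith [hi1.1, hi1.2.1]) (by linarith [hk1.1, hk1.2.1])
  linarith [hi2.2.2]

/-- Moshchevitin's improvement of Jarník's inequality for `m = 1`, `n = 3`:
`ω ≥ (ω̂/2)(ω̂/(1-ω̂) + √((ω̂/(1-ω̂))² + 4ω̂/(1-ω̂)))`.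
The conclusion `ω ≥ RHS`, where `ω = sup{γ ≥ 0 : liminf t^γ ψ(t) < ∞}` (possibly `+∞`),
is expressed as: every real `x < RHS` is exceeded by some element of that set. -/
theorem stmt17 (θ : Fin 3 → ℝ)
    (hindep : LinearIndependent ℚ ![(1 : ℝ), θ 0, θ 1, θ 2])
    (omegaHat : ℝ)
    (homegaHat : IsLUB {γ : ℝ | 0 ≤ γ ∧ ∃ C : ℝ,
      ∀ᶠ t : ℝ in atTop, t ^ γ * psi3 θ t ≤ C} omegaHat) :
    ∀ x : ℝ,
      x < omegaHat / 2 * (omegaHat / (1 - omegaHat) +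
        Real.sqrt ((omegaHat / (1 - omegaHat)) ^ 2 + 4 * omegaHat / (1 - omegaHat))) →
      ∃ γ : ℝ, (0 ≤ γ ∧ ∃ C : ℝ, ∃ᶠ t : ℝ in atTop, t ^ γ * psi3 θ t ≤ C) ∧ x < γ := by
  intro x hx
  rcases lt_or_ge x 0 with hx0 | hx0
  · refine ⟨0, ⟨le_rfl, 1 / 2, Eventually.frequently ?_⟩, hx0⟩
    filter_upwards [eventually_ge_atTop 1] with t ht
    rw [Real.rpow_zero, one_mul]
    exact (psi3_le_supDist θ le_rfl (by simpa using ht)).trans (supDist_le_half θ 1)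
  · have hw0 : 0 ≤ omegaHat := by
      obtain ⟨γ, hγ⟩ := homegaHat.nonempty
      exact hγ.1.trans (homegaHat.1 hγ)
    have hw : 0 < omegaHat ∧ omegaHat < 1 := by
      by_contra hcon
      have : omegaHat ≤ 0 ∨ 1 ≤ omegaHat := by
        by_contra! h
        exact hcon h
      linarith [rhs_nonpos this hw0]
    obtain ⟨α, ⟨-, C, hC⟩, β, hα, hα1, hxβ, h1, h2⟩ :=
      exists_exponents homegaHat hw.1 hw.2 hx0 hx
    have hβ : 0 < β := hx0.trans_lt hxβ
    refine ⟨β, ⟨hβ.le, 1, fun hcon => ?_⟩, hxβ⟩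
    refine not_eventually_lt_rpow_mul_psi3 hindep hα hα1 hβ h1 h2 hC ?_
    filter_upwards [hcon] with t ht
    exact not_le.1 ht
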